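/- Let G and H be strongly regular graphs on the vertex set {1,…,n}, with adjacency matrices A_G and A_H, and suppose G and H are co-spectral. Then there exists a real orthogonal n×n matrix Q (i.e. Q Qᵀ = I) such that Q A_G Qᵀ = A_H and Q (J − I − A_G) Qᵀ = J − I − A_H, where I is the identity matrix and J the all-ones matrix. -/

import Mathlib

open Matrix

/-!
Two real symmetric matrices with the same characteristic polynomial are orthogonally similar, so
`A_G` and `A_H` are conjugate by some orthogonal `P`. The second identity amounts to `Q J Qᵀ = J`,
for which it suffices that `Q` fixes the all-ones vector `1`.

If `G` is `r`-regular, then `P 1` is an eigenvector of `A_H` for `r`. So is `1`: the matrix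
`r I - A_H` is conjugate to the Laplacian of `G`, hence positive semidefinite, and its quadratic
form vanishes at `1` because `1ᵀ A 1 = tr A²` for every adjacency matrix. As `P 1` and `1` have the
same length, the Householder reflection exchanging them commutes with `A_H`, and composing it
with `P` gives `Q`.
-/

open Unitary (conjStarAlgAut conjStarAlgAut_apply conjStarAlgAut_mul_apply)

section Conjugation

variable {m 𝕜 : Type*} [Fintype m] [DecidableEq m]

theorem exists_conjStarAlgAut_eq_of_charpoly_eq [RCLike 𝕜] {A B : Matrix m m 𝕜}
    (hA : A.IsHermitian) (hB : B.IsHermitian) (h : A.charpoly = B.charpoly) :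
    ∃ U : unitaryGroup m 𝕜, conjStarAlgAut 𝕜 _ U A = B := by
  have heigenvalues : hA.eigenvalues = hB.eigenvalues :=
    (hA.eigenvalues_eq_eigenvalues_iff hB).2 h
  refine ⟨hB.eigenvectorUnitary * star hA.eigenvectorUnitary, ?_⟩
  rw [conjStarAlgAut_mul_apply, hA.conjStarAlgAut_star_eigenvectorUnitary, heigenvalues,
    ← hB.spectral_theorem]

theorem trace_conjStarAlgAut {R : Type*} [CommRing R] [StarRing R] (U : unitaryGroup m R)
    (A : Matrix m m R) : trace (conjStarAlgAut R _ U A) = trace A := by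
  rw [conjStarAlgAut_apply, trace_mul_cycle, Unitary.coe_star_mul_self, Matrix.one_mul]

theorem conjStarAlgAut_mulVec_mulVec {R : Type*} [CommRing R] [StarRing R]
    (U : unitaryGroup m R) (A : Matrix m m R) (x : m → R) :
    conjStarAlgAut R _ U A *ᵥ ((U : Matrix m m R) *ᵥ x) = (U : Matrix m m R) *ᵥ (A *ᵥ x) := by
  rw [conjStarAlgAut_apply, mulVec_mulVec, mulVec_mulVec, Matrix.mul_assoc,
    Unitary.coe_star_mul_self, Matrix.mul_one]

theorem mulVec_dotProduct_mulVec_of_transpose_mul_self {l R : Type*} [Fintype l]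
    [CommSemiring R] {Q : Matrix l m R} (hQ : Qᵀ * Q = 1) (x y : m → R) :
    (Q *ᵥ x) ⬝ᵥ (Q *ᵥ y) = x ⬝ᵥ y := by
  rw [dotProduct_mulVec, ← mulVec_transpose, mulVec_mulVec, hQ, one_mulVec]

theorem conjStarAlgAut_vecMulVec {R : Type*} [CommRing R] [StarRing R] (U : unitaryGroup m R)
    (x y : m → R) :
    conjStarAlgAut R _ U (vecMulVec x (star y)) =
      vecMulVec ((U : Matrix m m R) *ᵥ x) (star ((U : Matrix m m R) *ᵥ y)) := by
  rw [conjStarAlgAut_apply, mul_vecMulVec, vecMulVec_mul, star_mulVec,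
    star_eq_conjTranspose]

end Conjugation

section Householder

variable {m K : Type*} [Fintype m] [DecidableEq m] [Field K]

/-- The Householder matrix `1 - 2 w wᵀ / (wᵀ w)` of the reflection in the hyperplane orthogonal
to `w`. When `w ⬝ᵥ w = 0` the division convention makes it the identity. -/
def householder (w : m → K) : Matrix m m K :=
  1 - (2 / (w ⬝ᵥ w)) • vecMulVec w w

theorem transpose_householder (w : m → K) : (householder w)ᵀ = householder w := by
  rw [householder, transpose_sub, transpose_one, transpose_smul, transpose_vecMulVec]

theorem householder_mulVec (w x : m → K) :
    householder w *ᵥ x = x - (2 * (w ⬝ᵥ x) / (w ⬝ᵥ w)) • w := by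
  rw [householder, sub_mulVec, one_mulVec, smul_mulVec, vecMulVec_mulVec, op_smul_eq_smul,
    smul_smul, div_mul_eq_mul_div]

theorem householder_mul_self (w : m → K) : householder w * householder w = 1 := by
  have hsq : vecMulVec w w * vecMulVec w w = (w ⬝ᵥ w) • vecMulVec w w := by
    rw [vecMulVec_mul_vecMulVec, vecMulVec_smul]
  have hcoeff : 2 / (w ⬝ᵥ w) * (2 / (w ⬝ᵥ w)) * (w ⬝ᵥ w) = 2 * (2 / (w ⬝ᵥ w)) := by
    rcases eq_or_ne (w ⬝ᵥ w) 0 with h0 | h0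
    · simp [h0]
    · field_simp
  rw [householder, sub_mul, mul_sub, mul_sub, smul_mul_smul_comm, hsq, smul_smul, hcoeff,
    mul_smul, two_smul, Matrix.one_mul, Matrix.one_mul, Matrix.mul_one]
  abel

theorem householder_mem_orthogonalGroup [StarRing K] [TrivialStar K] (w : m → K) :
    householder w ∈ orthogonalGroup m K := by
  rw [mem_orthogonalGroup_iff, transpose_householder, householder_mul_self]

theorem commute_householder_of_mulVec_eq_smul {B : Matrix m m K} (hB : B.IsSymm) {c : K}
    {w : m → K} (hw : B *ᵥ w = c • w) : Commute (householder w) B := by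
  have hwB : w ᵥ* B = c • w := by rw [← mulVec_transpose, hB.eq, hw]
  have hvec : Commute (vecMulVec w w) B := by
    rw [commute_iff_eq, vecMulVec_mul, mul_vecMulVec, hwB, hw, vecMulVec_smul, smul_vecMulVec]
  exact (Commute.one_left B).sub_left (hvec.smul_left _)

theorem householder_sub_mulVec [LinearOrder K] [IsStrictOrderedRing K] {u v : m → K}
    (huv : u ⬝ᵥ u = v ⬝ᵥ v) : householder (u - v) *ᵥ u = v := by
  rcases eq_or_ne u v with rfl | hne
  · simp [householder_mulVec]
  have hpos : (u - v) ⬝ᵥ (u - v) ≠ 0 :=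
    fun h => hne (sub_eq_zero.1 (dotProduct_self_eq_zero.1 h))
  have hproj : 2 * ((u - v) ⬝ᵥ u) = (u - v) ⬝ᵥ (u - v) := by
    simp only [sub_dotProduct, dotProduct_sub, dotProduct_comm v u]
    linear_combination huv
  rw [householder_mulVec, hproj, div_self hpos, one_smul, sub_sub_cancel]

end Householder

theorem exists_conjStarAlgAut_eq_and_mulVec_eq {m : Type*} [Fintype m] [DecidableEq m]
    {A B : Matrix m m ℝ} (hA : A.IsHermitian) (hB : B.IsHermitian)
    (h : A.charpoly = B.charpoly) {c : ℝ} {u v : m → ℝ} (hu : A *ᵥ u = c • u)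
    (hv : B *ᵥ v = c • v) (huv : u ⬝ᵥ u = v ⬝ᵥ v) :
    ∃ Q : orthogonalGroup m ℝ,
      conjStarAlgAut ℝ _ Q A = B ∧ (Q : Matrix m m ℝ) *ᵥ u = v := by
  obtain ⟨P, hP⟩ := exists_conjStarAlgAut_eq_of_charpoly_eq hA hB h
  set u' := (P : Matrix m m ℝ) *ᵥ u with hu'
  have hBu' : B *ᵥ u' = c • u' := by
    rw [← hP, conjStarAlgAut_mulVec_mulVec, hu, mulVec_smul]
  have hu'v : u' ⬝ᵥ u' = v ⬝ᵥ v := by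
    rw [mulVec_dotProduct_mulVec_of_transpose_mul_self
      ((mem_orthogonalGroup_iff' m ℝ).1 P.2), huv]
  let R : orthogonalGroup m ℝ := ⟨householder (u' - v), householder_mem_orthogonalGroup _⟩
  have hRB : Commute (R : Matrix m m ℝ) B :=
    commute_householder_of_mulVec_eq_smul (isHermitian_iff_isSymm.1 hB)
      (by rw [mulVec_sub, hBu', hv, smul_sub])
  refine ⟨R * P, ?_, ?_⟩
  · rw [conjStarAlgAut_mul_apply, hP, conjStarAlgAut_apply, hRB.eq, Matrix.mul_assoc,
      mem_unitaryGroup_iff.1 R.2, Matrix.mul_one]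
  · rw [Submonoid.coe_mul, ← mulVec_mulVec, ← hu', householder_sub_mulVec hu'v]

section Graph

variable {V R : Type*} [Fintype V] {G H : SimpleGraph V} [DecidableRel G.Adj]
  [DecidableRel H.Adj] {r : ℕ}

theorem adjMatrix_mulVec_one_eq_smul_iff [NonAssocSemiring R] [CharZero R] :
    G.adjMatrix R *ᵥ 1 = (r : R) • 1 ↔ G.IsRegularOfDegree r := by
  simp [funext_iff, SimpleGraph.IsRegularOfDegree]

variable (G) in
theorem trace_adjMatrix_mul_self [NonAssocSemiring R] :
    trace (G.adjMatrix R * G.adjMatrix R) = 1 ⬝ᵥ G.adjMatrix R *ᵥ 1 := by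
  simp only [trace, diag_apply, SimpleGraph.adjMatrix_mul_self_apply_self, one_dotProduct,
    SimpleGraph.adjMatrix_mulVec_apply, Pi.one_apply, Finset.sum_const, nsmul_one,
    SimpleGraph.card_neighborFinset_eq_degree]

variable [DecidableEq V]

theorem lapMatrix_eq_natCast_sub_adjMatrix [NonAssocRing R] (hG : G.IsRegularOfDegree r) :
    G.lapMatrix R = (r : Matrix V V R) - G.adjMatrix R := by
  simp only [SimpleGraph.lapMatrix, SimpleGraph.degMatrix, hG.degree_eq, diagonal_natCast]

theorem isRegularOfDegree_of_charpoly_adjMatrix_eq (hG : G.IsRegularOfDegree r)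
    (h : (G.adjMatrix ℝ).charpoly = (H.adjMatrix ℝ).charpoly) : H.IsRegularOfDegree r := by
  obtain ⟨P, hP⟩ := exists_conjStarAlgAut_eq_of_charpoly_eq
    (G.isHermitian_adjMatrix ℝ) (H.isHermitian_adjMatrix ℝ) h
  have hconj : conjStarAlgAut ℝ _ P (G.lapMatrix ℝ) = (r : Matrix V V ℝ) - H.adjMatrix ℝ := by
    rw [lapMatrix_eq_natCast_sub_adjMatrix hG, map_sub, map_natCast, hP]
  have hpsd : PosSemidef ((r : Matrix V V ℝ) - H.adjMatrix ℝ) :=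
    hconj ▸ (G.posSemidef_lapMatrix ℝ).mul_mul_conjTranspose_same _
  have hform : (1 : V → ℝ) ⬝ᵥ H.adjMatrix ℝ *ᵥ 1 = 1 ⬝ᵥ G.adjMatrix ℝ *ᵥ 1 := by
    rw [← trace_adjMatrix_mul_self, ← trace_adjMatrix_mul_self, ← hP, ← map_mul,
      trace_conjStarAlgAut]
  have hzero : star (1 : V → ℝ) ⬝ᵥ ((r : Matrix V V ℝ) - H.adjMatrix ℝ) *ᵥ 1 = 0 := by
    rw [star_one, sub_mulVec, dotProduct_sub, hform, adjMatrix_mulVec_one_eq_smul_iff.2 hG,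
      natCast_mulVec, sub_self]
  have hker := (hpsd.dotProduct_mulVec_zero_iff 1).1 hzero
  rw [sub_mulVec, natCast_mulVec, sub_eq_zero] at hker
  exact adjMatrix_mulVec_one_eq_smul_iff.1 hker.symm

theorem exists_conjStarAlgAut_adjMatrix_eq_and_mulVec_one (hG : G.IsRegularOfDegree r)
    (h : (G.adjMatrix ℝ).charpoly = (H.adjMatrix ℝ).charpoly) :
    ∃ Q : orthogonalGroup V ℝ, conjStarAlgAut ℝ _ Q (G.adjMatrix ℝ) = H.adjMatrix ℝ ∧
      (Q : Matrix V V ℝ) *ᵥ 1 = 1 :=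
  exists_conjStarAlgAut_eq_and_mulVec_eq (G.isHermitian_adjMatrix ℝ) (H.isHermitian_adjMatrix ℝ) h
    (adjMatrix_mulVec_one_eq_smul_iff.2 hG)
    (adjMatrix_mulVec_one_eq_smul_iff.2 (isRegularOfDegree_of_charpoly_adjMatrix_eq hG h)) rfl

theorem exists_orthogonal_conjugating_srg_general (hG : G.IsRegularOfDegree r)
    (h : (G.adjMatrix ℝ).charpoly = (H.adjMatrix ℝ).charpoly) :
    ∃ Q : Matrix V V ℝ, Q * Qᵀ = 1 ∧
      Q * G.adjMatrix ℝ * Qᵀ = H.adjMatrix ℝ ∧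
      Q * (Matrix.of (fun _ _ => (1 : ℝ)) - 1 - G.adjMatrix ℝ) * Qᵀ =
        Matrix.of (fun _ _ => (1 : ℝ)) - 1 - H.adjMatrix ℝ := by
  obtain ⟨Q, hQA, hQ1⟩ := exists_conjStarAlgAut_adjMatrix_eq_and_mulVec_one hG h
  have hJ : Matrix.of (fun _ _ => 1) = vecMulVec (1 : V → ℝ) (star (1 : V → ℝ)) := by
    ext i j
    simp [vecMulVec_apply]
  have hQJ : conjStarAlgAut ℝ _ Q (Matrix.of fun _ _ => 1) = Matrix.of fun _ _ => 1 := by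
    rw [hJ, conjStarAlgAut_vecMulVec, hQ1]
  have hQc : conjStarAlgAut ℝ _ Q (Matrix.of (fun _ _ => 1) - 1 - G.adjMatrix ℝ) =
      Matrix.of (fun _ _ => 1) - 1 - H.adjMatrix ℝ := by
    rw [map_sub, map_sub, map_one, hQJ, hQA]
  exact ⟨Q, (mem_orthogonalGroup_iff V ℝ).1 Q.2, hQA, hQc⟩

end Graph

/-- If `G` and `H` are co-spectral strongly regular graphs on
`{1,…,n}`, then there is a real orthogonal matrix `Q` with
`Q A_G Qᵀ = A_H` and `Q (J - I - A_G) Qᵀ = J - I - A_H`. -/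
theorem exists_orthogonal_conjugating_srg (n r₁ l₁ m₁ r₂ l₂ m₂ : ℕ)
    (G H : SimpleGraph (Fin n)) [DecidableRel G.Adj] [DecidableRel H.Adj]
    (hG : G.IsSRGWith n r₁ l₁ m₁) (hH : H.IsSRGWith n r₂ l₂ m₂)
    (h : (G.adjMatrix ℝ).charpoly = (H.adjMatrix ℝ).charpoly) :
    ∃ Q : Matrix (Fin n) (Fin n) ℝ, Q * Qᵀ = 1 ∧
      Q * G.adjMatrix ℝ * Qᵀ = H.adjMatrix ℝ ∧
      Q * (Matrix.of (fun _ _ => (1 : ℝ)) - 1 - G.adjMatrix ℝ) * Qᵀ =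
        Matrix.of (fun _ _ => (1 : ℝ)) - 1 - H.adjMatrix ℝ :=
  exists_orthogonal_conjugating_srg_general hG.regular h
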